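/- arXiv:1502.00991 — 8 statements merged into one kernel-verified Lean document; each statement's English description precedes it below -/
import Mathlib

section
/- Let G be a Hausdorff topological group and let H be a dense subgroup of G. If H, equipped with the subspace topology, is a locally compact space, then H is an open subgroup of G (and consequently H = G). -/
/-- If a dense subgroup `H` of a Hausdorff topological group `G` is locally compact
in the subspace topology, then `H` is open (and hence `H = G`). -/
theorem dense_subgroup_open_of_locallyCompact {G : Type*} [Group G] [TopologicalSpace G]
    [IsTopologicalGroup G] [T2Space G] (H : Subgroup G)
    (hdense : Dense (H : Set G)) (hH : LocallyCompactSpace H) :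
    IsOpen (H : Set G) ∧ H = ⊤ := by
  obtain ⟨K, hK, hK1⟩ := exists_compact_mem_nhds (1 : H)
  have hKc : IsClosed (Subtype.val '' K : Set G) :=
    (hK.image continuous_subtype_val).isClosed
  obtain ⟨V, hV, hVK⟩ := mem_nhds_subtype (H : Set G) (1 : H) K |>.1 hK1
  obtain ⟨U, hUV, hUo, hU1⟩ := mem_nhds_iff.1 hV
  have hsub : U ⊆ (H : Set G) := by
    have h1 : U ∩ (H : Set G) ⊆ Subtype.val '' K := by
      rintro x ⟨hxU, hxH⟩
      exact ⟨⟨x, hxH⟩, hVK (hUV hxU), rfl⟩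
    have h2 : U ⊆ Subtype.val '' K :=
      (hdense.open_subset_closure_inter hUo).trans (closure_minimal h1 hKc)
    intro x hx
    obtain ⟨y, -, rfl⟩ := h2 hx
    exact y.2
  have hopen : IsOpen (H : Set G) :=
    H.isOpen_of_mem_nhds (g := 1) (Filter.mem_of_superset (hUo.mem_nhds hU1) hsub)
  refine ⟨hopen, ?_⟩
  have hcl : IsClosed (H : Set G) := H.isClosed_of_isOpen hopen
  apply SetLike.coe_injective
  rw [← hcl.closure_eq, hdense.closure_eq, Subgroup.coe_top]
end

section
/- Let G be an abstract group and let H be a subgroup of G equipped with a topology making H a topological group. Suppose that for every open subset U of H and all elements g, g' of G, the set of elements h of H such that h = g·u·g' for some u in U is open in H. Then there exists a unique topology on G making G a topological group such that the inclusion map H → G is an open embedding (i.e., a homeomorphism onto an open subset of G). -/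
theorem aux_group {G : Type*} [Group G] (H : Subgroup G)
    [TopologicalSpace H] [IsTopologicalGroup H] [TopologicalSpace G]
    (he : Topology.IsOpenEmbedding ((↑) : H → G))
    (hl : ∀ g : G, Continuous (fun x : G => g * x))
    (hr : ∀ g : G, Continuous (fun x : G => x * g)) : IsTopologicalGroup G := by
  have h1 : nhds (1 : G) = Filter.map ((↑) : H → G) (nhds 1) := by
    simpa using (he.map_nhds_eq (1 : H)).symm
  refine IsTopologicalGroup.of_nhds_one' ?_ ?_ ?_ ?_
  · rw [h1, Filter.prod_map_map_eq, Filter.tendsto_map'_iff]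
    have : Filter.Tendsto (fun p : H × H => p.1 * p.2) (nhds 1 ×ˢ nhds 1) (nhds 1) := by
      have := (continuous_mul (M := H)).tendsto (1, 1)
      rwa [nhds_prod_eq, mul_one] at this
    exact Filter.tendsto_map.comp this
  · rw [h1, Filter.tendsto_map'_iff]
    have : Filter.Tendsto (fun p : H => p⁻¹) (nhds 1) (nhds 1) := by
      have := (continuous_inv (G := H)).tendsto 1
      rwa [inv_one] at this
    exact Filter.tendsto_map.comp this
  · intro x
    let e : G ≃ₜ G := ⟨Equiv.mulLeft x, hl x, hl x⁻¹⟩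
    have h := (e.map_nhds_eq 1).symm
    rwa [show e 1 = x from mul_one x] at h
  · intro x
    let e : G ≃ₜ G := ⟨Equiv.mulRight x, hr x, hr x⁻¹⟩
    have h := (e.map_nhds_eq 1).symm
    rwa [show e 1 = x from one_mul x] at h

/-- If `H` is a subgroup of an abstract group `G`, carrying a topology making it a
topological group, and for every open `U ⊆ H` and all `g, g' ∈ G` the set
`gUg' ∩ H` is open in `H`, then there is a unique group topology on `G` making
the inclusion `H → G` an open embedding. -/
theorem exists_unique_group_topology_of_subgroup {G : Type*} [Group G] (H : Subgroup G)
    [TopologicalSpace H] [IsTopologicalGroup H]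
    (hcond : ∀ U : Set H, IsOpen U → ∀ g g' : G,
      IsOpen {h : H | ∃ u ∈ U, (h : G) = g * (u : G) * g'}) :
    ∃! τ : TopologicalSpace G,
      @IsTopologicalGroup G τ _ ∧ @Topology.IsOpenEmbedding (↥H) G _ τ ((↑) : H → G) := by
  refine existsUnique_of_exists_of_unique ?_ ?_
  · let τ : TopologicalSpace G :=
      { IsOpen := fun W => ∀ g g' : G, IsOpen ((fun h : H => g * (h : G) * g') ⁻¹' W)
        isOpen_univ := fun _ _ => isOpen_univ
        isOpen_inter := fun _ _ hs ht g g' => (hs g g').inter (ht g g')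
        isOpen_sUnion := fun S hS g g' => by
          rw [Set.preimage_sUnion]
          exact isOpen_biUnion fun t ht => hS t ht g g' }
    have ho : ∀ W : Set G, @IsOpen G τ W ↔
      ∀ g g' : G, IsOpen ((fun h : H => g * (h : G) * g') ⁻¹' W) := fun _ => Iff.rfl
    have he : Topology.IsOpenEmbedding ((↑) : H → G) := by
      refine Topology.IsOpenEmbedding.of_continuous_injective_isOpenMap ?_
        Subtype.val_injective ?_
      · refine continuous_def.2 fun W hW => ?_
        simpa using (ho W).1 hW 1 1
      · intro U hU
        refine (ho _).2 fun g g' => ?_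
        convert hcond U hU g⁻¹ g'⁻¹ using 1
        ext h
        constructor
        · rintro ⟨u, hu, e⟩
          refine ⟨u, hu, ?_⟩
          simp only at e
          rw [e]; group
        · rintro ⟨u, hu, e⟩
          refine ⟨u, hu, ?_⟩
          simp only
          rw [e]; group
    refine ⟨τ, aux_group H he ?_ ?_, he⟩
    · intro a
      refine continuous_def.2 fun W hW => (ho _).2 fun g g' => ?_
      simpa only [Set.preimage_preimage, mul_assoc] using (ho W).1 hW (a * g) g'
    · intro a
      refine continuous_def.2 fun W hW => (ho _).2 fun g g' => ?_
      simpa only [Set.preimage_preimage, mul_assoc] using (ho W).1 hW g (g' * a)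
  · rintro τ₁ τ₂ ⟨g1, e1⟩ ⟨g2, e2⟩
    refine IsTopologicalGroup.ext g1 g2 ?_
    have h1 := @Topology.IsOpenEmbedding.map_nhds_eq _ _ _ _ τ₁ e1 (1 : H)
    have h2 := @Topology.IsOpenEmbedding.map_nhds_eq _ _ _ _ τ₂ e2 (1 : H)
    exact h1.symm.trans h2
end

section
/- Let X be a compact Hausdorff topological space and let G be a group acting faithfully on X by homeomorphisms. Let 𝒰 be a collection of open subsets of X forming a basis for the topology of X, and suppose G acts transitively on 𝒰 (for all U, V ∈ 𝒰 there exists g ∈ G with g·U = V). Let H be a nontrivial normal subgroup of G. Then for every V ∈ 𝒰 and every g ∈ G whose support {x ∈ X : g·x ≠ x} is contained in V, there exists ρ ∈ H such that ρ·x = g·x for all x ∈ V. -/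
open Pointwise

/-- Epstein-type lemma: if a group `G` acts faithfully by homeomorphisms on a compact
Hausdorff space `X`, transitively on a basis `𝒰` of open sets, and `H` is a nontrivial
normal subgroup of `G`, then every `g ∈ G` supported in a basis set `V ∈ 𝒰` agrees on
`V` with some element `ρ ∈ H`. -/
theorem exists_mem_normal_subgroup_eq_on_basis_set
    {X : Type*} [TopologicalSpace X] [CompactSpace X] [T2Space X]
    {G : Type*} [Group G] [MulAction G X] [FaithfulSMul G X]
    (hcont : ∀ g : G, Continuous fun x : X => g • x)
    (𝒰 : Set (Set X)) (hbasis : TopologicalSpace.IsTopologicalBasis 𝒰)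
    (htrans : ∀ U ∈ 𝒰, ∀ V ∈ 𝒰, ∃ g : G, g • U = V)
    (H : Subgroup G) (hnormal : H.Normal) (hnontriv : H ≠ ⊥) :
    ∀ V ∈ 𝒰, ∀ g : G, {x : X | g • x ≠ x} ⊆ V →
      ∃ ρ ∈ H, ∀ x ∈ V, ρ • x = g • x := by
  intro V hV g hg
  obtain ⟨⟨h, hH⟩, h0⟩ := Subgroup.ne_bot_iff_exists_ne_one.1 hnontriv
  have h1 : h ≠ 1 := fun e => h0 (Subtype.ext e)
  obtain ⟨x, hx⟩ : ∃ x : X, h • x ≠ x := by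
    by_contra hc
    push Not at hc
    exact h1 (FaithfulSMul.eq_of_smul_eq_smul (α := X) fun x => by rw [hc x, one_smul])
  obtain ⟨B, A, hB, hA, hxB, hxA, hd⟩ := t2_separation hx
  obtain ⟨U, hU, hxU, hUs⟩ := hbasis.exists_subset_of_mem_open
    (show x ∈ A ∩ (fun x : X => h • x) ⁻¹' B from ⟨hxA, hxB⟩)
    (hA.inter (hB.preimage (hcont h)))
  obtain ⟨k, rfl⟩ := htrans U hU V hV
  have key : ∀ y ∈ k • U, (k * h * k⁻¹)⁻¹ • y ∉ k • U := by
    intro y hy hy2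
    rw [Set.mem_smul_set_iff_inv_smul_mem] at hy hy2
    have h2 : h⁻¹ • k⁻¹ • y ∈ U := by
      simpa [smul_smul, mul_assoc] using hy2
    have h3 := (hUs h2).2
    simp only [Set.mem_preimage, smul_inv_smul] at h3
    exact Set.disjoint_left.1 hd h3 (hUs hy).1
  have hk : k * h * k⁻¹ ∈ H := hnormal.conj_mem h hH k
  generalize k * h * k⁻¹ = f at key hk
  refine ⟨(g * f * g⁻¹) * f⁻¹, H.mul_mem (hnormal.conj_mem f hk g) (H.inv_mem hk), ?_⟩
  intro y hy
  have h4 : g • f⁻¹ • y = f⁻¹ • y := by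
    by_contra hne
    exact key y hy (hg hne)
  have h5 : g⁻¹ • f⁻¹ • y = f⁻¹ • y := by
    rw [inv_smul_eq_iff, h4]
  simp only [mul_smul]
  rw [h5, smul_inv_smul]
end

section
/- Let X be a compact Hausdorff topological space and let G be a group acting faithfully on X by homeomorphisms. Let 𝒰 be a collection of open subsets of X forming a basis for the topology of X, and suppose G acts transitively on 𝒰. Let H be a nontrivial normal subgroup of G, and suppose there exist α₁, α₂ ∈ H and a point x ∈ X such that the three points x, α₁·x, α₂·x are pairwise distinct. Then for every V ∈ 𝒰 and all g₁, g₂ ∈ G whose supports {x : g₁·x ≠ x} and {x : g₂·x ≠ x} are both contained in V, there exist ρ₁, ρ₂ ∈ H such that the commutators satisfy [g₁, g₂] = [ρ₁, ρ₂] in G. -/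
open Pointwise
open scoped commutatorElement

theorem aux_commute {X G : Type*} [Group G] [MulAction G X] [FaithfulSMul G X]
    (A B : Set X) (hAB : ∀ y ∈ A, y ∉ B) (g h : G)
    (hg : ∀ y, g • y ≠ y → y ∈ A) (hh : ∀ y, h • y ≠ y → y ∈ B) : Commute g h := by
  apply FaithfulSMul.eq_of_smul_eq_smul (α := X)
  intro y
  rw [mul_smul, mul_smul]
  by_cases h1 : g • y = y
  · rw [h1]
    by_cases h2 : h • y = y
    · rw [h2, h1]
    · have h3 : h • y ∈ B := hh _ (fun h => h2 (smul_left_cancel _ h))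
      by_contra h4
      exact hAB _ (hg _ h4) h3
  · have h3 : g • y ∈ A := hg _ (fun h => h1 (smul_left_cancel _ h))
    have h4 : h • y = y := by
      by_contra h5
      exact hAB _ (hg _ h1) (hh _ h5)
    have h5 : h • g • y = g • y := by
      by_contra h5
      exact hAB _ h3 (hh _ h5)
    rw [h4, h5]

theorem aux_comm {G : Type*} [Group G] (g₁ g₂ a b : G) (h1 : Commute a g₁) (h2 : Commute a g₂)
    (h3 : Commute b g₁) (h4 : Commute b g₂) (h5 : Commute a b) :
    ⁅g₁, g₂⁆ = ⁅g₁ * a, g₂ * b⁆ := by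
  have e1 : g₁ * a * (g₂ * b) = (g₁ * g₂) * (a * b) := by
    rw [mul_assoc, ← mul_assoc a, h2.eq]; group
  have e2 : g₂ * b * (g₁ * a) = (g₂ * g₁) * (a * b) := by
    rw [mul_assoc, ← mul_assoc b, h3.eq, h5.eq]; group
  have e3 : ∀ p q : G, ⁅p, q⁆ = (p * q) * (q * p)⁻¹ := by
    intro p q; rw [commutatorElement_def]; group
  rw [e3, e3, e1, e2]; group

/-- Epstein-type commutator lemma: if a group `G` acts faithfully by homeomorphisms on a
compact Hausdorff space `X`, transitively on a basis `𝒰` of open sets, `H` is a nontrivial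
normal subgroup of `G` containing elements `α₁, α₂` such that `x`, `α₁ • x`, `α₂ • x` are
pairwise distinct for some `x`, then for all `g₁, g₂ ∈ G` supported in a common basis set
`V ∈ 𝒰`, the commutator `[g₁, g₂]` equals a commutator `[ρ₁, ρ₂]` of elements of `H`. -/
theorem commutator_eq_commutator_of_normal_subgroup
    {X : Type*} [TopologicalSpace X] [CompactSpace X] [T2Space X]
    {G : Type*} [Group G] [MulAction G X] [FaithfulSMul G X]
    (hcont : ∀ g : G, Continuous fun x : X => g • x)
    (𝒰 : Set (Set X)) (hbasis : TopologicalSpace.IsTopologicalBasis 𝒰)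
    (htrans : ∀ U ∈ 𝒰, ∀ V ∈ 𝒰, ∃ g : G, g • U = V)
    (H : Subgroup G) (hnormal : H.Normal) (hnontriv : H ≠ ⊥)
    (α₁ α₂ : G) (hα₁ : α₁ ∈ H) (hα₂ : α₂ ∈ H) (x : X)
    (hx₁ : α₁ • x ≠ x) (hx₂ : α₂ • x ≠ x) (hx₁₂ : α₁ • x ≠ α₂ • x) :
    ∀ V ∈ 𝒰, ∀ g₁ g₂ : G, {x : X | g₁ • x ≠ x} ⊆ V → {x : X | g₂ • x ≠ x} ⊆ V →
      ∃ ρ₁ ∈ H, ∃ ρ₂ ∈ H, ⁅g₁, g₂⁆ = ⁅ρ₁, ρ₂⁆ := by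
  intro V hV g₁ g₂ hg₁ hg₂
  obtain ⟨A1, B1, oA1, oB1, xA1, xB1, d1⟩ := t2_separation hx₁
  obtain ⟨A2, B2, oA2, oB2, xA2, xB2, d2⟩ := t2_separation hx₂
  obtain ⟨A3, B3, oA3, oB3, xA3, xB3, d3⟩ := t2_separation hx₁₂
  have c1 := hcont α₁
  have c2 := hcont α₂
  obtain ⟨U, hU, hxU, hUW⟩ := hbasis.exists_subset_of_mem_open
    (u := (B1 ∩ B2) ∩ (((fun y => α₁ • y) ⁻¹' (A1 ∩ A3)) ∩ ((fun y => α₂ • y) ⁻¹' (A2 ∩ B3))))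
    (a := x) ⟨⟨xB1, xB2⟩, ⟨xA1, xA3⟩, ⟨xA2, xB3⟩⟩
    ((oB1.inter oB2).inter (((oA1.inter oA3).preimage c1).inter ((oA2.inter oB3).preimage c2)))
  obtain ⟨g, rfl⟩ := htrans U hU V hV
  have k1 : ∀ y ∈ U, ∀ z ∈ U, α₁ • y ≠ z := fun y hy z hz e =>
    Set.disjoint_left.1 d1 (hUW hy).2.1.1 (Set.mem_of_eq_of_mem e (hUW hz).1.1)
  have k2 : ∀ y ∈ U, ∀ z ∈ U, α₂ • y ≠ z := fun y hy z hz e =>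
    Set.disjoint_left.1 d2 (hUW hy).2.2.1 (Set.mem_of_eq_of_mem e (hUW hz).1.2)
  have k3 : ∀ y ∈ U, ∀ z ∈ U, α₁ • y ≠ α₂ • z := fun y hy z hz e =>
    Set.disjoint_left.1 d3 (hUW hy).2.1.2 (Set.mem_of_eq_of_mem e (hUW hz).2.2.2)
  have sup : ∀ k : G, {x : X | k • x ≠ x} ⊆ g • U → ∀ β : G,
      ∀ y, (β * k⁻¹ * β⁻¹) • y ≠ y → y ∈ β • (g • U) := by
    intro k hk β y hy
    rw [Set.mem_smul_set_iff_inv_smul_mem]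
    apply hk
    intro h
    apply hy
    rw [mul_smul, mul_smul, smul_eq_iff_eq_inv_smul, smul_eq_iff_eq_inv_smul, inv_inv]
    exact h.symm
  have n1 : g * α₁ * g⁻¹ ∈ H := hnormal.conj_mem _ hα₁ g
  have n2 : g * α₂ * g⁻¹ ∈ H := hnormal.conj_mem _ hα₂ g
  have m : ∀ α : G, (g * α * g⁻¹) • (g • U) = g • (α • U) := by
    intro α; simp [smul_smul, mul_assoc]
  have D1 : ∀ y ∈ (g * α₁ * g⁻¹) • (g • U), y ∉ g • U := by
    rw [m]
    rintro _ ⟨_, ⟨y, hy, rfl⟩, rfl⟩ ⟨z, hz, e⟩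
    exact k1 y hy z hz (smul_left_cancel g e).symm
  have D2 : ∀ y ∈ (g * α₂ * g⁻¹) • (g • U), y ∉ g • U := by
    rw [m]
    rintro _ ⟨_, ⟨y, hy, rfl⟩, rfl⟩ ⟨z, hz, e⟩
    exact k2 y hy z hz (smul_left_cancel g e).symm
  have D3 : ∀ y ∈ (g * α₁ * g⁻¹) • (g • U), y ∉ (g * α₂ * g⁻¹) • (g • U) := by
    rw [m, m]
    rintro _ ⟨_, ⟨y, hy, rfl⟩, rfl⟩ ⟨_, ⟨z, hz, rfl⟩, e⟩
    exact k3 y hy z hz (smul_left_cancel g e).symm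
  generalize g * α₁ * g⁻¹ = β₁ at *
  generalize g * α₂ * g⁻¹ = β₂ at *
  refine ⟨g₁ * (β₁ * g₁⁻¹ * β₁⁻¹), ?_, g₂ * (β₂ * g₂⁻¹ * β₂⁻¹), ?_, ?_⟩
  · rw [← mul_assoc, ← mul_assoc]
    exact H.mul_mem (hnormal.conj_mem _ n1 g₁) (H.inv_mem n1)
  · rw [← mul_assoc, ← mul_assoc]
    exact H.mul_mem (hnormal.conj_mem _ n2 g₂) (H.inv_mem n2)
  · apply aux_comm
    · exact aux_commute _ _ D1 _ _ (sup _ hg₁ _) hg₁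
    · exact aux_commute _ _ D1 _ _ (sup _ hg₁ _) hg₂
    · exact aux_commute _ _ D2 _ _ (sup _ hg₂ _) hg₁
    · exact aux_commute _ _ D2 _ _ (sup _ hg₂ _) hg₂
    · exact aux_commute _ _ D3 _ _ (sup _ hg₁ _) (sup _ hg₂ _)
end

section
/- Let q ≥ 2 and let T be a simple graph on an infinite vertex set that is a tree (connected and acyclic) and in which every vertex has degree exactly q+1. Then the subgroup Aut⁺(T) of the automorphism group of T, consisting of those automorphisms φ such that the graph distance between v and φ(v) is even for every vertex v, is a simple group. -/
namespace TreeSimple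

/-- The half-tree behind `v` seen from `u`. -/
def HT {V : Type*} (G : SimpleGraph V) (u v x : V) : Prop := G.dist x v < G.dist x u

/-- Type-preserving automorphisms. -/
def InA {V : Type*} (G : SimpleGraph V) (φ : Equiv.Perm V) : Prop :=
  (∀ v w : V, G.Adj (φ v) (φ w) ↔ G.Adj v w) ∧ ∀ v : V, Even (G.dist v (φ v))

section
variable {V : Type*} {G : SimpleGraph V}

lemma dist_adj (hT : G.IsTree) (x : V) {u v : V} (h : G.Adj u v) :
    G.dist x u = G.dist x v + 1 ∨ G.dist x v = G.dist x u + 1 :=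
  hT.dist_eq_dist_add_one_of_adj x h

lemma ht_compl (hT : G.IsTree) {u v x : V} (h : G.Adj u v) : ¬ HT G u v x ↔ HT G v u x := by
  have := dist_adj hT x h
  unfold HT; omega

lemma ht_self {u v : V} (h : G.Adj u v) : HT G u v v := by
  unfold HT
  have : G.dist v u = 1 := SimpleGraph.dist_eq_one_iff_adj.2 h.symm
  simp [this]

lemma ht_not_base {u v : V} : ¬ HT G u v u := by
  unfold HT; simp

lemma exists_toward (hT : G.IsTree) {u x : V} (h : x ≠ u) : ∃ v, G.Adj u v ∧ HT G u v x := by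
  obtain ⟨p, hp⟩ := hT.connected.exists_walk_length_eq_dist u x
  cases p with
  | nil => exact absurd rfl h
  | cons hadj q =>
    refine ⟨_, hadj, ?_⟩
    unfold HT
    have := SimpleGraph.dist_le q
    rw [SimpleGraph.Walk.length_cons] at hp
    rw [SimpleGraph.dist_comm (u := x), SimpleGraph.dist_comm (u := x)]
    omega

lemma toward_unique (hT : G.IsTree) {u x v w : V} (hv : G.Adj u v) (hw : G.Adj u w)
    (h1 : HT G u v x) (h2 : HT G u w x) : v = w := by
  obtain ⟨p, hp⟩ := hT.connected.exists_walk_length_eq_dist v x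
  obtain ⟨q, hq⟩ := hT.connected.exists_walk_length_eq_dist w x
  have e1 := dist_adj hT x hv
  have e2 := dist_adj hT x hw
  unfold HT at h1 h2
  have c1 : G.dist u x = G.dist x u := SimpleGraph.dist_comm
  have c2 : G.dist v x = G.dist x v := SimpleGraph.dist_comm
  have c3 : G.dist w x = G.dist x w := SimpleGraph.dist_comm
  have hp' : (SimpleGraph.Walk.cons hv p).IsPath := by
    apply SimpleGraph.Walk.isPath_of_length_eq_dist
    rw [SimpleGraph.Walk.length_cons]; omega
  have hq' : (SimpleGraph.Walk.cons hw q).IsPath := by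
    apply SimpleGraph.Walk.isPath_of_length_eq_dist
    rw [SimpleGraph.Walk.length_cons]; omega
  have := (hT.isAcyclic.subsingleton_path u x).elim ⟨_, hp'⟩ ⟨_, hq'⟩
  have := congrArg (fun r : G.Path u x => r.1.snd) this
  simpa using this

lemma cross (hT : G.IsTree) {u v x y : V} (huv : G.Adj u v) (hx : HT G u v x)
    (hy : ¬ HT G u v y) (hxy : G.Adj x y) : x = v ∧ y = u := by
  have key : ∀ u v x y : V, G.Adj u v → HT G u v x → ¬ HT G u v y → G.Adj x y → x = v := by
    intro u v x y huv hx hy hxy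
    by_contra hne
    obtain ⟨z, hz, hzv⟩ := exists_toward hT (u := x) (x := v) (Ne.symm hne)
    have c : ∀ a b, G.dist a b = G.dist b a := fun a b => SimpleGraph.dist_comm
    have a1 := dist_adj hT x huv
    have a2 := dist_adj hT y huv
    have a3 := dist_adj hT u hxy
    have a4 := dist_adj hT v hxy
    have a5 := dist_adj hT u hz
    have a6 := dist_adj hT v hz
    have a7 := dist_adj hT z huv
    unfold HT at hx hy hzv
    rw [c u x, c u y] at a3
    rw [c v x, c v y] at a4
    rw [c u x, c u z] at a5
    rw [c v x, c v z] at a6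
    rw [c v x, c v z] at hzv
    have : y = z := by
      apply toward_unique hT (u := x) (x := u) hxy hz
      · unfold HT; rw [c u x, c u y]; omega
      · unfold HT; rw [c u x, c u z]; omega
    subst this
    omega
  refine ⟨key u v x y huv hx hy hxy, ?_⟩
  have hy' := (ht_compl hT huv).1 hy
  exact key v u y x huv.symm hy' ((ht_compl hT huv.symm).2 hx) hxy.symm

lemma nest (hT : G.IsTree) {u a b x : V} (hu : G.Adj u a) (hb : G.Adj a b) (hne : u ≠ b)
    (h : HT G a b x) : HT G u a x := by
  by_contra h'
  exact hne (toward_unique hT hu.symm hb ((ht_compl hT hu).1 h') h)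

lemma nest2 (hT : G.IsTree) {v p w s : V} (hp : G.Adj v p) (hs : G.Adj w s)
    (hw : HT G v p w) (hv : ¬ HT G w s v) : ∀ x, HT G w s x → HT G v p x := by
  suffices H : ∀ n x, G.dist x s = n → HT G w s x → HT G v p x from fun x => H _ x rfl
  intro n
  induction n with
  | zero =>
    intro x hx hxs
    have : x = s := hT.connected.dist_eq_zero_iff.1 hx
    subst this
    by_contra hc
    obtain ⟨h1, h2⟩ := cross hT hp hw hc hs
    exact hv (h2 ▸ hxs)
  | succ n ih =>
    intro x hx hxs
    have hne : s ≠ x := by rintro rfl; simp at hx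
    obtain ⟨y, hy, hys⟩ := exists_toward hT hne
    have c : ∀ a b, G.dist a b = G.dist b a := fun a b => SimpleGraph.dist_comm
    have a1 := dist_adj hT s hy
    have a2 := dist_adj hT w hy
    have a3 := dist_adj hT x hs
    rw [c s x, c s y] at a1
    rw [c w x, c w y] at a2
    have hxs' := hxs
    unfold HT at hys hxs'
    rw [c s x, c s y] at hys
    have hyD : HT G w s y := by unfold HT; omega
    have := ih y (by omega) hyD
    by_contra hc
    obtain ⟨h1, h2⟩ := cross hT hp this hc hy.symm
    exact hv (h2 ▸ hxs)

lemma parity (hT : G.IsTree) (z x y : V) : Even (G.dist z x + G.dist z y + G.dist x y) := by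
  obtain ⟨p, hp⟩ := hT.connected.exists_walk_length_eq_dist x y
  rw [← hp]
  clear hp
  induction p with
  | nil => simp
  | cons h p ih =>
    rw [SimpleGraph.Walk.length_cons]
    have := dist_adj hT z h
    grind

/-- forward adjacency is enough to preserve distance for perms -/
lemma dist_map (hT : G.IsTree) {φ : Equiv.Perm V}
    (h : ∀ v w : V, G.Adj (φ v) (φ w) ↔ G.Adj v w) (x y : V) :
    G.dist (φ x) (φ y) = G.dist x y := by
  have le : ∀ ψ : Equiv.Perm V, (∀ v w : V, G.Adj (ψ v) (ψ w) ↔ G.Adj v w) →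
      ∀ x y, G.dist (ψ x) (ψ y) ≤ G.dist x y := by
    intro ψ hψ x y
    obtain ⟨p, hp⟩ := hT.connected.exists_walk_length_eq_dist x y
    let f : G →g G := ⟨ψ, fun {a b} hab => (hψ a b).2 hab⟩
    rw [← hp, ← SimpleGraph.Walk.length_map f p]
    exact SimpleGraph.dist_le _
  apply le_antisymm (le φ h x y)
  have := le φ⁻¹ (fun v w => by rw [← h]; simp) (φ x) (φ y)
  simpa using this

lemma ht_map (hT : G.IsTree) {φ : Equiv.Perm V}
    (h : ∀ v w : V, G.Adj (φ v) (φ w) ↔ G.Adj v w) (u v x : V) :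
    HT G (φ u) (φ v) (φ x) ↔ HT G u v x := by
  unfold HT; rw [dist_map hT h, dist_map hT h]

lemma inA_of_one (hT : G.IsTree) {φ : Equiv.Perm V}
    (h : ∀ v w : V, G.Adj (φ v) (φ w) ↔ G.Adj v w) (v : V) (hv : Even (G.dist v (φ v))) :
    InA G φ := by
  refine ⟨h, fun x => ?_⟩
  have h1 := parity hT v x (φ x)
  have h2 := parity hT (φ v) v (φ x)
  rw [dist_map hT h] at h2
  have c : G.dist (φ v) v = G.dist v (φ v) := SimpleGraph.dist_comm
  rw [c] at h2
  grind

lemma exists_rec (v : V) (μ : V → ℕ) (par : V → V) (hpar : ∀ x, x ≠ v → μ x = μ (par x) + 1)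
    (step : V → V → V) : ∃ k : V → V, k v = v ∧ ∀ x, x ≠ v → k x = step x (k (par x)) := by
  classical
  let K : ℕ → V → V := fun n => Nat.rec (fun _ => v) (fun _ f x => if x = v then v else step x (f (par x))) n
  have hK : ∀ n x, K (n+1) x = if x = v then v else step x (K n (par x)) := fun n x => rfl
  refine ⟨fun x => K (μ x) x, ?_, ?_⟩
  · show K (μ v) v = v
    cases h : μ v with
    | zero => rfl
    | succ n => rw [hK]; simp
  · intro x hx
    show K (μ x) x = step x (K (μ (par x)) (par x))
    rw [hpar x hx, hK, if_neg hx]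

lemma exists_swap (hT : G.IsTree) (q : ℕ) (hreg : ∀ v : V, (G.neighborSet v).ncard = q + 1)
    {v a b c : V} (ha : G.Adj v a) (hb : G.Adj v b) (hc : G.Adj v c) (hac : a ≠ c) (hbc : b ≠ c) :
    ∃ k : Equiv.Perm V, InA G k ∧ k v = v ∧ k a = b ∧ ∀ x, HT G v c x → k x = x := by
  classical
  have hpar : ∀ x, ∃ p, x ≠ v → G.Adj x p ∧ HT G x p v := by
    intro x
    by_cases h : x = v
    · exact ⟨v, fun h' => absurd h h'⟩
    · obtain ⟨p, hp⟩ := exists_toward hT (Ne.symm h)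
      exact ⟨p, fun _ => hp⟩
  choose par hpar using hpar
  have hmu : ∀ x, x ≠ v → G.dist v x = G.dist v (par x) + 1 := by
    intro x hx
    have h1 := (hpar x hx).2
    have h2 := dist_adj hT v (hpar x hx).1
    unfold HT at h1
    omega
  have hpe : ∀ x p, G.Adj x p → G.dist v x = G.dist v p + 1 → par x = p := by
    intro x p hxp hd
    have hx : x ≠ v := by rintro rfl; simp at hd
    refine toward_unique hT (hpar x hx).1 hxp (hpar x hx).2 ?_
    unfold HT; omega
  have hlab : ∀ x, ∃ (child : Fin q → V), x ≠ v →
      (∀ i, G.Adj x (child i) ∧ child i ≠ par x) ∧ Function.Injective child ∧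
      ∀ w, G.Adj x w → w ≠ par x → ∃ i, child i = w := by
    intro x
    by_cases hx : x = v
    · exact ⟨fun _ => v, fun h => absurd hx h⟩
    have hcard : (G.neighborSet x \ {par x}).ncard = q := by
      rw [Set.ncard_sdiff_singleton_of_mem (by simpa using (hpar x hx).1), hreg]; simp
    have hfin : (G.neighborSet x \ {par x}).Finite := by
      apply Set.Finite.sdiff
      apply Set.finite_of_ncard_ne_zero
      rw [hreg]; omega
    have : Finite (G.neighborSet x \ {par x} : Set V) := hfin
    have e := Finite.equivFinOfCardEq (α := (G.neighborSet x \ {par x} : Set V)) hcard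
    refine ⟨fun i => (e.symm i).1, fun _ => ⟨fun i => ?_, ?_, ?_⟩⟩
    · have h := (e.symm i).2
      exact ⟨h.1, fun h' => h.2 h'⟩
    · intro i j hij
      exact e.symm.injective (Subtype.ext hij)
    · intro w hw hwp
      exact ⟨e ⟨w, by simpa using ⟨hw, hwp⟩⟩, by simp⟩
  choose child hchild using hlab
  have hcd : ∀ x, x ≠ v → ∀ i, G.dist v (child x i) = G.dist v x + 1 := by
    intro x hx i
    have h := (hchild x hx).1 i
    rcases dist_adj hT v h.1 with h' | h'
    · exact absurd (hpe _ _ h.1 h').symm h.2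
    · exact h'
  have hcp : ∀ x, x ≠ v → ∀ i, par (child x i) = x := by
    intro x hx i
    exact hpe _ _ ((hchild x hx).1 i).1.symm (hcd x hx i)
  have hlab : ∀ w, ∃ i : ℕ, w ≠ v → par w ≠ v → ∃ h : i < q, child (par w) ⟨i, h⟩ = w := by
    intro w
    by_cases hw : w ≠ v ∧ par w ≠ v
    · obtain ⟨i, hi⟩ := (hchild _ hw.2).2.2 w (hpar w hw.1).1.symm (by
        intro h
        have h1 := hmu _ hw.1
        have h2 := hmu _ hw.2
        rw [← h] at h2
        omega)
      exact ⟨i.1, fun _ _ => ⟨i.2, hi⟩⟩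
    · exact ⟨0, fun h1 h2 => absurd ⟨h1, h2⟩ hw⟩
  choose lab hlab using hlab
  have hlc : ∀ x, x ≠ v → ∀ i, lab (child x i) = i := by
    intro x hx i
    have h1 : child x i ≠ v := by
      intro h; have := hcd x hx i; rw [h] at this; simp at this
    obtain ⟨h, h2⟩ := hlab (child x i) h1 (by rw [hcp x hx]; exact hx)
    rw [hcp x hx] at h2
    have := (hchild x hx).2.1 h2
    exact congrArg Fin.val this
  obtain ⟨k, hkv, hk⟩ := exists_rec v (fun x => G.dist v x) par hmu
    (fun x y => if par x = v then Equiv.swap a b x else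
      if h : lab x < q then child y ⟨lab x, h⟩ else v)
  have hd0 : ∀ x, G.dist v x = 0 → x = v := fun x h => (hT.connected.dist_eq_zero_iff.1 h).symm
  have k1 : ∀ x, x ≠ v → par x = v → k x = Equiv.swap a b x := by
    intro x hx hp; rw [hk x hx, if_pos hp]
  have k2 : ∀ x, x ≠ v → par x ≠ v → ∃ h : lab x < q, k x = child (k (par x)) ⟨lab x, h⟩ := by
    intro x hx hp
    obtain ⟨h, -⟩ := hlab x hx hp
    exact ⟨h, by rw [hk x hx, if_neg hp, dif_pos h]⟩
  have hadj1 : ∀ x, G.Adj v x → G.dist v x = 1 := fun x h => SimpleGraph.dist_eq_one_iff_adj.2 h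
  have hswapadj : ∀ x, G.Adj v x → G.Adj v (Equiv.swap a b x) := by
    intro x hx
    rw [Equiv.swap_apply_def]
    split_ifs <;> assumption
  have hparv : ∀ x, x ≠ v → par x = v → G.Adj v x := by
    intro x hx hp
    have := (hpar x hx).1
    rw [hp] at this; exact this.symm
  have hne : ∀ x n, G.dist v x = n + 1 → x ≠ v := by
    rintro x n h rfl; simp at h
  have main : ∀ n x, G.dist v x = n →
      G.dist v (k x) = n ∧ (x ≠ v → par (k x) = k (par x)) ∧ (x ≠ v → par x ≠ v → lab (k x) = lab x) ∧
      (x ≠ v → G.Adj (k x) (k (par x))) ∧ k (k x) = x ∧ (HT G v c x → k x = x) := by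
    intro n
    induction n with
    | zero =>
      intro x hx
      have := hd0 x hx
      subst this
      simp [hkv]
    | succ n ih =>
      intro x hx
      have hxv := hne _ _ hx
      have hmx := hmu x hxv
      obtain ⟨i1, i2, i3, i4, i5, i6⟩ := ih (par x) (by omega)
      by_cases hp : par x = v
      · have e := k1 x hxv hp
        have hvx := hparv x hxv hp
        have h1 := hswapadj x hvx
        have hs1 := hadj1 _ h1
        have h2 : par (k x) = v := by
          rw [e]; exact hpe _ _ h1.symm (by rw [hs1]; simp)
        have hn : n = 0 := by rw [hp, SimpleGraph.dist_self] at hmx; omega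
        subst hn
        refine ⟨by rw [e, hs1], fun _ => by rw [h2, hp, hkv], fun _ h => absurd hp h,
          fun _ => by rw [hp, hkv, e]; exact h1.symm, ?_, ?_⟩
        · rw [k1 (k x) (by rw [e]; exact h1.ne') h2, e, Equiv.swap_apply_self]
        · intro hD
          have : x = c := by
            refine toward_unique hT hvx hc ?_ hD
            exact ht_self hvx
          subst this
          rw [e]; exact Equiv.swap_apply_of_ne_of_ne hac.symm hbc.symm
      · obtain ⟨hl, e⟩ := k2 x hxv hp
        obtain ⟨hl', e'⟩ := hlab x hxv hp
        have hpd : G.dist v (par x) = n := by omega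
        have hkp : k (par x) ≠ v := by
          intro h
          rw [h, SimpleGraph.dist_self] at i1
          exact hp (hd0 _ (by omega))
        have hkx : G.dist v (k x) = n + 1 := by rw [e, hcd _ hkp, i1]
        have hpk : par (k x) = k (par x) := by rw [e, hcp _ hkp]
        have hlk : lab (k x) = lab x := by rw [e, hlc _ hkp]
        refine ⟨hkx, fun _ => hpk, fun _ _ => hlk, fun _ => ?_, ?_, ?_⟩
        · rw [e]; exact ((hchild _ hkp).1 _).1.symm
        · obtain ⟨h3, h4⟩ := k2 (k x) (hne _ _ hkx) (by rw [hpk]; exact hkp)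
          rw [h4]
          simp only [hpk, i5, hlk]
          exact e'
        · intro hD
          have : HT G v c (par x) := by
            by_contra hcon
            exact hp (cross hT hc hD hcon (hpar x hxv).1).2
          rw [e, i6 this]; exact e'
  have hinv : Function.Involutive k := fun x => (main _ x rfl).2.2.2.2.1
  have hfwd : ∀ x y, G.Adj x y → G.Adj (k x) (k y) := by
    intro x y hxy
    rcases dist_adj hT v hxy with h | h
    · have := (main _ x rfl).2.2.2.1 (hne _ _ h)
      rwa [hpe _ _ hxy h] at this
    · have := (main _ y rfl).2.2.2.1 (hne _ _ h)
      rw [hpe _ _ hxy.symm h] at this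
      exact this.symm
  refine ⟨hinv.toPerm, ?_, hkv, ?_, fun x => (main _ x rfl).2.2.2.2.2⟩
  · apply inA_of_one hT _ v
    · simp [hkv]
    · intro x y
      refine ⟨fun h => ?_, hfwd x y⟩
      have := hfwd _ _ h
      simpa [hinv x, hinv y] using this
  · show k a = b
    rw [k1 a ha.ne' (hpe _ _ ha.symm (by rw [hadj1 _ ha]; simp))]
    simp

lemma exists_third (q : ℕ) (hq : 2 ≤ q) (hreg : ∀ v : V, (G.neighborSet v).ncard = q + 1)
    (v a b : V) : ∃ c, G.Adj v c ∧ c ≠ a ∧ c ≠ b := by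
  classical
  by_contra! h
  have hsub : G.neighborSet v ⊆ {a, b} := by
    intro c hc
    by_cases hca : c = a
    · simp [hca]
    · simp [h c hc hca]
  have h1 := Set.ncard_le_ncard hsub (by simp)
  have h2 : ({a, b} : Set V).ncard ≤ 2 := by
    have := Set.ncard_insert_le a {b}
    simpa using this
  rw [hreg] at h1
  omega

lemma trans_edges (hT : G.IsTree) (S : Subgroup (Equiv.Perm V)) (hSA : ∀ k ∈ S, InA G k)
    (hS : ∀ v a b, G.Adj v a → G.Adj v b → ∃ k ∈ S, k v = v ∧ k a = b)
    {u v u' v' : V} (huv : G.Adj u v) (huv' : G.Adj u' v') (he : Even (G.dist u u')) :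
    ∃ k ∈ S, k u = u' ∧ k v = v' := by
  obtain ⟨n, hn⟩ := he
  induction n generalizing u v with
  | zero =>
    have : u = u' := hT.connected.dist_eq_zero_iff.1 hn
    subst this
    exact hS u v v' huv huv'
  | succ n ih =>
    have c : ∀ a b, G.dist a b = G.dist b a := fun a b => SimpleGraph.dist_comm
    have hne : u' ≠ u := by rintro rfl; simp at hn
    obtain ⟨p, hp, hpd⟩ := exists_toward hT hne
    have a1 := dist_adj hT u' hp
    unfold HT at hpd
    rw [c u u'] at hn
    have hne2 : u' ≠ p := by rintro rfl; rw [SimpleGraph.dist_self] at a1; omega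
    obtain ⟨r, hr, hrd⟩ := exists_toward hT hne2
    have a2 := dist_adj hT u' hr
    unfold HT at hrd
    obtain ⟨k, hk, hkp, hku⟩ := hS p u r hp.symm hr
    have hkv : G.Adj r (k v) := by
      rw [← hku]; exact ((hSA k hk).1 u v).2 huv
    obtain ⟨k', hk', e1, e2⟩ := ih hkv (by rw [c]; omega)
    exact ⟨k' * k, S.mul_mem hk' hk, by simp [hku, e1], by simp [e2]⟩

lemma comm_trick (A : Subgroup (Equiv.Perm V)) (hA : ∀ φ, φ ∈ A ↔ InA G φ)
    {h g : Equiv.Perm V} (hh : h ∈ A) (hg : g ∈ A) (B : V → Prop)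
    (hgB : ∀ x, ¬ B x → g x = x)
    (hd : ∀ n m : ℕ, ∀ x, B ((h ^ n)⁻¹ x) → B ((h ^ m)⁻¹ x) → n = m) :
    ∃ f ∈ A, g = f * h * f⁻¹ * h⁻¹ := by
  classical
  have hfun : ∀ g : Equiv.Perm V, ∃ f : V → V,
      (∀ n x, B ((h ^ n)⁻¹ x) → f x = (h ^ n) (g ((h ^ n)⁻¹ x))) ∧
      (∀ x, (∀ n, ¬ B ((h ^ n)⁻¹ x)) → f x = x) := by
    intro g
    refine ⟨fun x => if hx : ∃ n, B ((h ^ n)⁻¹ x) then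
      (h ^ hx.choose) (g ((h ^ hx.choose)⁻¹ x)) else x, ?_, ?_⟩
    · intro n x hx
      have hex : ∃ n, B ((h ^ n)⁻¹ x) := ⟨n, hx⟩
      have : hex.choose = n := hd _ _ x hex.choose_spec hx
      simp only [dif_pos hex, this]
    · intro x hx
      have hex : ¬ ∃ n, B ((h ^ n)⁻¹ x) := by push Not; exact hx
      simp only [dif_neg hex]
  have hBg : ∀ x, B (g x) ↔ B x := by
    intro x
    constructor
    · intro h1; by_contra h2; rw [hgB x h2] at h1; exact h2 h1
    · intro h1; by_contra h2
      have := g.injective (hgB _ h2)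
      rw [this] at h2; exact h2 h1
  have hBg' : ∀ x, B (g⁻¹ x) ↔ B x := by
    intro x; rw [← hBg]; simp
  obtain ⟨f, f1, f2⟩ := hfun g
  obtain ⟨f', f1', f2'⟩ := hfun g⁻¹
  have hff : ∀ x, f' (f x) = x := by
    intro x
    by_cases hx : ∃ n, B ((h ^ n)⁻¹ x)
    · obtain ⟨n, hn⟩ := hx
      rw [f1 n x hn, f1' n _ (by simpa [hBg] using hn)]
      simp
    · push Not at hx
      rw [f2 x hx, f2' x hx]
  have hff' : ∀ x, f (f' x) = x := by
    intro x
    by_cases hx : ∃ n, B ((h ^ n)⁻¹ x)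
    · obtain ⟨n, hn⟩ := hx
      rw [f1' n x hn, f1 n _ (by
        have hb := (hBg' _).2 hn
        simpa using hb)]
      simp
    · push Not at hx
      rw [f2' x hx, f2 x hx]
  have hcA : ∀ n : ℕ, h ^ n * g * (h ^ n)⁻¹ ∈ A := fun n =>
    A.mul_mem (A.mul_mem (A.pow_mem hh n) hg) (A.inv_mem (A.pow_mem hh n))
  have hcfix : ∀ n x, ¬ B ((h ^ n)⁻¹ x) → (h ^ n * g * (h ^ n)⁻¹) x = x := by
    intro n x hx
    simp only [Equiv.Perm.mul_apply]
    rw [hgB _ hx]; simp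
  have hpair : ∀ x y, ∃ p ∈ A, f x = p x ∧ f y = p y := by
    intro x y
    by_cases hx : ∃ n, B ((h ^ n)⁻¹ x)
    · obtain ⟨n, hn⟩ := hx
      by_cases hy : ∃ m, B ((h ^ m)⁻¹ y)
      · obtain ⟨m, hm⟩ := hy
        by_cases hnm : n = m
        · subst hnm
          exact ⟨_, hcA n, by rw [f1 n x hn]; rfl, by rw [f1 n y hm]; rfl⟩
        · refine ⟨_, A.mul_mem (hcA n) (hcA m), ?_, ?_⟩
          · rw [Equiv.Perm.mul_apply, hcfix m x (fun hc => hnm (hd _ _ x hn hc)), f1 n x hn]; rfl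
          · rw [Equiv.Perm.mul_apply, hcfix n, f1 m y hm]
            · rfl
            · intro hc
              refine hnm (hd n m _ hc ?_)
              simpa [hBg] using hm
      · push Not at hy
        exact ⟨_, hcA n, by rw [f1 n x hn]; rfl, by rw [f2 y hy, hcfix n y (hy n)]⟩
    · push Not at hx
      by_cases hy : ∃ m, B ((h ^ m)⁻¹ y)
      · obtain ⟨m, hm⟩ := hy
        exact ⟨_, hcA m, by rw [f2 x hx, hcfix m x (hx m)], by rw [f1 m y hm]; rfl⟩
      · push Not at hy
        exact ⟨1, A.one_mem, f2 x hx, f2 y hy⟩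
  let F : Equiv.Perm V := ⟨f, f', hff, hff'⟩
  have hF : F ∈ A := by
    rw [hA]
    refine ⟨fun x y => ?_, fun x => ?_⟩
    · obtain ⟨p, hp, h1, h2⟩ := hpair x y
      show G.Adj (f x) (f y) ↔ _
      rw [h1, h2]; exact ((hA p).1 hp).1 x y
    · obtain ⟨p, hp, h1, -⟩ := hpair x x
      show Even (G.dist x (f x))
      rw [h1]; exact ((hA p).1 hp).2 x
  refine ⟨F, hF, ?_⟩
  have hsh : ∀ n x, (h ^ (n+1))⁻¹ x = (h ^ n)⁻¹ (h⁻¹ x) := by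
    intro n x
    rw [pow_succ', mul_inv_rev]; rfl
  have key : ∀ x, g (h (f (h⁻¹ x))) = f x := by
    intro x
    by_cases hx : ∃ n, B ((h ^ n)⁻¹ x)
    · obtain ⟨n, hn⟩ := hx
      cases n with
      | zero =>
        have : f (h⁻¹ x) = h⁻¹ x := by
          apply f2
          intro m hm
          rw [← hsh] at hm
          have := hd _ _ x hn hm
          omega
        rw [this, f1 0 x hn]; simp
      | succ n =>
        have e : h (f (h⁻¹ x)) = f x := by
          rw [f1 (n+1) x hn, f1 n _ (by rw [← hsh]; exact hn), hsh, pow_succ' h n]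
          rfl
        rw [e]
        apply hgB
        intro hB
        have h2 : B ((h ^ (n+1))⁻¹ (f x)) := by
          rw [f1 _ x hn]; simpa [hBg] using hn
        have := hd (n+1) 0 (f x) h2 (by simpa using hB)
        omega
    · push Not at hx
      have : f (h⁻¹ x) = h⁻¹ x := by
        apply f2
        intro m hm
        rw [← hsh] at hm
        exact hx _ hm
      rw [this, f2 x hx]
      simpa using hgB x (by simpa using hx 0)
  have e : g * (h * F * h⁻¹) = F := by
    ext x; exact key x
  calc g = (g * (h * F * h⁻¹)) * (h * F * h⁻¹)⁻¹ := by group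
    _ = F * (h * F * h⁻¹)⁻¹ := by rw [e]
    _ = _ := by group

/-- Splitting a perm fixing an edge. -/
lemma split_edge (hT : G.IsTree) {g : Equiv.Perm V} (hg : InA G g) {u v : V} (huv : G.Adj u v)
    (hu : g u = u) (hv : g v = v) :
    ∃ g1 : Equiv.Perm V, InA G g1 ∧ (∀ x, ¬ HT G u v x → g1 x = x) ∧
      (∀ x, HT G u v x → g1 x = g x) := by
  classical
  have hD : ∀ x, HT G u v (g x) ↔ HT G u v x := by
    intro x
    have := ht_map hT hg.1 u v x
    rwa [hu, hv] at this
  let g1 : Equiv.Perm V := Equiv.Perm.ofSubtype (g.subtypePerm (p := HT G u v) hD)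
  have e1 : ∀ x, HT G u v x → g1 x = g x := by
    intro x hx
    simp only [g1]
    rw [Equiv.Perm.ofSubtype_apply_of_mem _ hx]; rfl
  have e2 : ∀ x, ¬ HT G u v x → g1 x = x := fun x hx =>
    Equiv.Perm.ofSubtype_apply_of_not_mem _ hx
  have hmix : ∀ x y, HT G u v x → ¬ HT G u v y → (G.Adj (g x) y ↔ G.Adj x y) := by
    intro x y hx hy
    constructor
    · intro h
      obtain ⟨h1, h2⟩ := cross hT huv ((hD x).2 hx) hy h
      have : x = v := g.injective (by rw [h1, hv])
      rw [this, h2]; exact huv.symm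
    · intro h
      obtain ⟨h1, h2⟩ := cross hT huv hx hy h
      rw [h1, h2, hv]; exact huv.symm
  refine ⟨g1, inA_of_one hT ?_ u (by rw [e2 u ht_not_base]; simp), e2, e1⟩
  intro x y
  by_cases hx : HT G u v x <;> by_cases hy : HT G u v y
  · rw [e1 x hx, e1 y hy]; exact hg.1 x y
  · rw [e1 x hx, e2 y hy]; exact hmix x y hx hy
  · rw [e2 x hx, e1 y hy, G.adj_comm, hmix y x hy hx, G.adj_comm]
  · rw [e2 x hx, e2 y hy]

lemma exists_hyp (hT : G.IsTree) (q : ℕ) (hq : 2 ≤ q)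
    (hreg : ∀ v : V, (G.neighborSet v).ncard = q + 1)
    (A N : Subgroup (Equiv.Perm V)) (hA : ∀ φ, φ ∈ A ↔ InA G φ) (hNA : N ≤ A)
    (hN : ∀ a ∈ A, ∀ n ∈ N, a * n * a⁻¹ ∈ N)
    (hswap : ∀ v a b, G.Adj v a → G.Adj v b → ∃ k ∈ A, k v = v ∧ k a = b)
    {g : Equiv.Perm V} (hg : g ∈ N) (hg1 : g ≠ 1) :
    ∃ h ∈ N, ∃ u v, G.Adj u v ∧
      ∀ n m : ℕ, ∀ x, HT G u v ((h ^ n)⁻¹ x) → HT G u v ((h ^ m)⁻¹ x) → n = m := by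
  obtain ⟨v, hv⟩ : ∃ v, g v ≠ v := by
    by_contra! h
    exact hg1 (Equiv.ext h)
  have hgA := ((hA g).1 (hNA hg)).1
  obtain ⟨p, hp, hpd⟩ := exists_toward hT hv
  obtain ⟨r, hr, hrd⟩ := exists_toward hT (Ne.symm hv)
  obtain ⟨c, hc, hcp, hcr⟩ := exists_third q hq hreg v p (g⁻¹ r)
  have hgc : G.Adj (g v) (g c) := (hgA v c).2 hc
  have hgcr : g c ≠ r := by
    intro h; apply hcr; rw [← h]; simp
  obtain ⟨e, he, hec, hep⟩ := exists_third q hq hreg v c p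
  obtain ⟨c', hc', hcv, -⟩ := exists_third q hq hreg c v v
  obtain ⟨k, hk, hkc, hkc'⟩ := hswap c c' v hc' hc.symm
  have hkA := ((hA k).1 hk).1
  -- `g` maps `D = HT v c` into `HT v p`
  have hgD : ∀ x, HT G v c x → HT G v p (g x) := by
    intro x hx
    refine nest2 hT hp hgc hpd ?_ _ ((ht_map hT hgA v c x).2 hx)
    intro h
    exact hgcr (toward_unique hT hgc hr h hrd)
  have hpc : ∀ x, HT G v p x → ¬ HT G v c x := fun x h1 h2 =>
    hcp (toward_unique hT hc hp h2 h1)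
  have hpe : ∀ x, HT G v p x → ¬ HT G v e x := fun x h1 h2 =>
    hep (toward_unique hT he hp h2 h1)
  have hec' : ∀ x, HT G v e x → ¬ HT G v c x := fun x h1 h2 =>
    hec (toward_unique hT he hc h1 h2)
  let s : Equiv.Perm V := k * g * k⁻¹
  have hs : s ∈ N := hN k hk g hg
  have hsA := ((hA s).1 (hNA hs)).1
  -- `s` maps the complement of `D` into `D`
  have hsE : ∀ y, ¬ HT G v c y → HT G v c (s y) := by
    intro y hy
    have h1 : HT G c v y := (ht_compl hT hc).1 hy
    have h2 : HT G c c' (k⁻¹ y) := by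
      rw [← ht_map hT hkA, hkc, hkc']; simpa using h1
    have h3 : HT G v c (k⁻¹ y) := nest hT hc hc' (Ne.symm hcv) h2
    have h4 : ¬ HT G c c' (g (k⁻¹ y)) := fun h =>
      hpc _ (hgD _ h3) (nest hT hc hc' (Ne.symm hcv) h)
    rw [← ht_map hT hkA, hkc, hkc'] at h4
    exact (ht_compl hT hc.symm).1 h4
  have hsD : ∀ x, HT G v c x → HT G v c ((s * g) x) := fun x hx =>
    hsE _ (hpc _ (hgD x hx))
  have hpow : ∀ n : ℕ, ∀ x, HT G v c x → HT G v c (((s * g) ^ n) x) := by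
    intro n
    induction n with
    | zero => intro x hx; simpa using hx
    | succ n ih => intro x hx; rw [pow_succ]; exact ih _ (hsD x hx)
  have hB : ∀ x, HT G (s v) (s e) x → HT G v e (s⁻¹ x) := by
    intro x hx
    rw [← ht_map hT hsA]; simpa using hx
  have hBD : ∀ x, HT G (s v) (s e) x → HT G v c x := by
    intro x hx
    have := hsE _ (hec' _ (hB x hx))
    simpa using this
  have hBh : ∀ x, HT G v c x → ¬ HT G (s v) (s e) ((s * g) x) := by
    intro x hx h
    have := hB _ h
    have h2 : s⁻¹ ((s * g) x) = g x := by simp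
    rw [h2] at this
    exact hpe _ (hgD x hx) this
  have hlt : ∀ n m : ℕ, ∀ x, n < m → HT G (s v) (s e) (((s * g) ^ n)⁻¹ x) →
      HT G (s v) (s e) (((s * g) ^ m)⁻¹ x) → False := by
    intro n m x hnm h1 h2
    obtain ⟨d, rfl⟩ : ∃ d, m = n + (d + 1) := ⟨m - n - 1, by omega⟩
    have h3 := hpow d _ (hBD _ h2)
    apply hBh _ h3
    have : (s * g) (((s * g) ^ d) (((s * g) ^ (n + (d + 1)))⁻¹ x)) = ((s * g) ^ n)⁻¹ x := by
      have : (s * g) * (s * g) ^ d * ((s * g) ^ (n + (d + 1)))⁻¹ = ((s * g) ^ n)⁻¹ := by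
        rw [← pow_succ', add_comm n, pow_add]; group
      rw [← this]; rfl
    rw [this]; exact h1
  refine ⟨s * g, N.mul_mem hs hg, s v, s e, (hsA v e).2 he, fun n m x h1 h2 => ?_⟩
  rcases lt_trichotomy n m with h | h | h
  · exact (hlt n m x h h1 h2).elim
  · exact h
  · exact (hlt m n x h h2 h1).elim

lemma normal_eq_top (hT : G.IsTree) (q : ℕ) (hq : 2 ≤ q)
    (hreg : ∀ v : V, (G.neighborSet v).ncard = q + 1)
    (A N : Subgroup (Equiv.Perm V)) (hA : ∀ φ, φ ∈ A ↔ InA G φ) (hNA : N ≤ A)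
    (hN : ∀ a ∈ A, ∀ n ∈ N, a * n * a⁻¹ ∈ N)
    {g0 : Equiv.Perm V} (hg0 : g0 ∈ N) (hg1 : g0 ≠ 1) : A ≤ N := by
  have hswap : ∀ v a b, G.Adj v a → G.Adj v b → ∃ k ∈ A, k v = v ∧ k a = b := by
    intro v a b ha hb
    obtain ⟨c, hc, hca, hcb⟩ := exists_third q hq hreg v a b
    obtain ⟨k, hk, h1, h2, -⟩ := exists_swap hT q hreg ha hb hc hca.symm hcb.symm
    exact ⟨k, (hA k).2 hk, h1, h2⟩
  obtain ⟨h, hh, u0, v0, huv0, hd⟩ := exists_hyp hT q hq hreg A N hA hNA hN hswap hg0 hg1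
  have base : ∀ g ∈ A, (∀ x, ¬ HT G u0 v0 x → g x = x) → g ∈ N := by
    intro g hg hfix
    obtain ⟨f, hf, e⟩ := comm_trick A hA (hNA hh) hg (HT G u0 v0) hfix hd
    rw [e]
    exact N.mul_mem (hN f hf h hh) (N.inv_mem hh)
  have even : ∀ u v, G.Adj u v → Even (G.dist u0 u) →
      ∀ g ∈ A, (∀ x, ¬ HT G u v x → g x = x) → g ∈ N := by
    intro u v huv he g hg hfix
    obtain ⟨k, hk, h1, h2⟩ := trans_edges hT A (fun k hk => (hA k).1 hk) hswap huv0 huv he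
    have hkA := ((hA k).1 hk).1
    have : k⁻¹ * g * k ∈ N := by
      apply base
      · exact A.mul_mem (A.mul_mem (A.inv_mem hk) hg) hk
      · intro x hx
        rw [← ht_map hT hkA, h1, h2] at hx
        simp [hfix _ hx]
    have := hN k hk _ this
    convert this using 1
    group
  have all : ∀ u v, G.Adj u v → ∀ g ∈ A, (∀ x, ¬ HT G u v x → g x = x) → g ∈ N := by
    intro u v huv g hg hfix
    by_cases he : Even (G.dist u0 u)
    · exact even u v huv he g hg hfix
    · obtain ⟨w, hw, hwv, -⟩ := exists_third q hq hreg u v v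
      have hd := dist_adj hT u0 hw
      refine even w u hw.symm (by grind) g hg (fun x hx => hfix x (fun hc => hx ?_))
      exact nest hT hw.symm huv hwv hc
  have hswapN : ∀ v a b, G.Adj v a → G.Adj v b → ∃ k ∈ N, k v = v ∧ k a = b := by
    intro v a b ha hb
    obtain ⟨c, hc, hca, hcb⟩ := exists_third q hq hreg v a b
    obtain ⟨k, hk, h1, h2, h3⟩ := exists_swap hT q hreg ha hb hc hca.symm hcb.symm
    refine ⟨k, all c v hc.symm k ((hA k).2 hk) (fun x hx => h3 x ?_), h1, h2⟩
    exact (ht_compl hT hc.symm).1 hx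
  intro g hg
  obtain ⟨k, hk, h1, h2⟩ := trans_edges hT N (fun k hk => (hA k).1 (hNA hk)) hswapN huv0
    ((((hA g).1 hg).1 u0 v0).2 huv0) (((hA g).1 hg).2 u0)
  have hg' : k⁻¹ * g ∈ A := A.mul_mem (A.inv_mem (hNA hk)) hg
  obtain ⟨g1, hg1, f1, f2⟩ := split_edge hT ((hA _).1 hg') huv0 (by simp [← h1]) (by simp [← h2])
  have m1 : g1 ∈ N := all u0 v0 huv0 g1 ((hA _).2 hg1) f1
  have m2 : g1⁻¹ * (k⁻¹ * g) ∈ N := by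
    apply all v0 u0 huv0.symm _ (A.mul_mem (A.inv_mem ((hA _).2 hg1)) hg')
    intro x hx
    have := f2 x ((ht_compl hT huv0.symm).1 hx)
    rw [Equiv.Perm.mul_apply, ← this]; simp
  have := N.mul_mem hk (N.mul_mem m1 m2)
  simpa using this

end
end TreeSimple

/-- For a `(q+1)`-regular tree `T` (with `q ≥ 2`) on an infinite vertex set, the group
`Aut⁺(T)` of type-preserving automorphisms (those moving every vertex an even distance)
is a simple group. -/
theorem typePreservingAut_isSimpleGroup {V : Type*} [Infinite V] (q : ℕ) (hq : 2 ≤ q)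
    (G : SimpleGraph V) (hconn : G.Connected) (hacyc : G.IsAcyclic)
    (hreg : ∀ v : V, (G.neighborSet v).ncard = q + 1)
    (A : Subgroup (Equiv.Perm V))
    (hA : (A : Set (Equiv.Perm V)) =
      {φ : Equiv.Perm V | (∀ v w : V, G.Adj (φ v) (φ w) ↔ G.Adj v w) ∧
        ∀ v : V, Even (G.dist v (φ v))}) :
    IsSimpleGroup A := by
  classical
  have hT : G.IsTree := ⟨hconn, hacyc⟩
  have hA' : ∀ φ, φ ∈ A ↔ TreeSimple.InA G φ := by
    intro φ
    rw [← SetLike.mem_coe, hA]; rfl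
  have hnt : Nontrivial A := by
    obtain ⟨v⟩ := hconn.nonempty
    obtain ⟨a, ha, -, -⟩ := TreeSimple.exists_third q hq hreg v v v
    obtain ⟨b, hb, hba, -⟩ := TreeSimple.exists_third q hq hreg v a a
    obtain ⟨c, hc, hca, hcb⟩ := TreeSimple.exists_third q hq hreg v a b
    obtain ⟨k, hk, h1, h2, -⟩ := TreeSimple.exists_swap hT q hreg ha hb hc hca.symm hcb.symm
    refine ⟨⟨k, (hA' k).2 hk⟩, 1, fun h => ?_⟩
    have h' : k = 1 := congrArg Subtype.val h
    rw [h'] at h2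
    exact hba (by simpa using h2.symm)
  refine { toNontrivial := hnt, eq_bot_or_eq_top_of_normal := fun H hH => ?_ }
  by_cases hb : H = ⊥
  · exact Or.inl hb
  right
  obtain ⟨⟨g, hg⟩, hg1'⟩ := (Subgroup.ne_bot_iff_exists_ne_one (H := H)).1 hb
  have hg1 : g ≠ 1 := fun h => hg1' (Subtype.ext h)
  have key := TreeSimple.normal_eq_top hT q hq hreg A (H.map A.subtype) hA' (by
      rintro _ ⟨x, -, rfl⟩
      exact x.2) (by
      rintro a ha _ ⟨x, hx, rfl⟩
      exact ⟨⟨a, ha⟩ * x * ⟨a, ha⟩⁻¹, hH.conj_mem x hx _, rfl⟩)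
    (g0 := ((g : A) : Equiv.Perm V)) ⟨_, hg, rfl⟩ (fun h => hg1 (Subtype.ext h))
  rw [eq_top_iff]
  intro x _
  obtain ⟨y, hy, e⟩ := key x.2
  have : y = x := Subtype.ext e
  exact this ▸ hy
end

section
/- Let q ≥ 2 and let T be a simple graph on an infinite vertex set that is a tree (connected and acyclic) in which every vertex has degree exactly q+1. Then the subgroup of the automorphism group of T generated by the set of automorphisms that fix both endpoints of some edge (i.e., all φ such that there exist adjacent vertices v, w with φ(v) = v and φ(w) = w) is equal to the subgroup Aut⁺(T) of type-preserving automorphisms, namely those φ such that dist(v, φ(v)) is even for every vertex v. -/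
open SimpleGraph

theorem aux_walk_parity {V : Type*} {G : SimpleGraph V} (hG : G.IsTree) (r : V) {u v : V}
    (p : G.Walk u v) : (p.length + G.dist r u + G.dist r v) % 2 = 0 := by
  induction p with
  | nil => simp; omega
  | cons h p ih =>
    have := hG.dist_eq_dist_add_one_of_adj r h
    simp only [Walk.length_cons]
    omega

theorem aux_parent_exists {V : Type*} {G : SimpleGraph V} (hG : G.IsTree) (m v : V) (h : v ≠ m) :
    ∃ w, G.Adj w v ∧ G.dist m v = G.dist m w + 1 := by
  obtain ⟨p, hp⟩ := hG.connected.exists_walk_length_eq_dist v m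
  cases p with
  | nil => exact absurd rfl h
  | @cons _ w _ hadj p =>
    refine ⟨w, hadj.symm, ?_⟩
    have h1 := dist_le p
    have h2 := hG.dist_eq_dist_add_one_of_adj m hadj
    rw [Walk.length_cons] at hp
    rw [dist_comm] at h1 hp
    omega

theorem aux_parent_unique {V : Type*} {G : SimpleGraph V} (hG : G.IsTree) (m v w₁ w₂ : V)
    (h₁ : G.Adj w₁ v) (d₁ : G.dist m v = G.dist m w₁ + 1)
    (h₂ : G.Adj w₂ v) (d₂ : G.dist m v = G.dist m w₂ + 1) : w₁ = w₂ := by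
  obtain ⟨p, hp⟩ := hG.connected.exists_walk_length_eq_dist m w₁
  obtain ⟨q, hq⟩ := hG.connected.exists_walk_length_eq_dist m w₂
  have a := Walk.isPath_of_length_eq_dist (p.concat h₁) (by rw [Walk.length_concat]; omega)
  have b := Walk.isPath_of_length_eq_dist (q.concat h₂) (by rw [Walk.length_concat]; omega)
  have := (hG.existsUnique_path m v).unique a b
  have := congrArg Walk.penultimate this
  simpa using this

theorem aux_swap {V : Type*} (q : ℕ) {G : SimpleGraph V} (hG : G.IsTree)
    (hreg : ∀ v : V, (G.neighborSet v).ncard = q + 1) (m a b : V) (ha : G.Adj m a)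
    (hb : G.Adj m b) :
    ∃ φ : Equiv.Perm V, (∀ v w : V, G.Adj (φ v) (φ w) ↔ G.Adj v w) ∧ φ m = m ∧ φ a = b ∧
      ∀ x, G.Adj m x → x ≠ a → x ≠ b → φ x = x := by
  classical
  have hne : Nonempty V := ⟨m⟩
  let C : V → Set V := fun v => {w | G.Adj v w ∧ G.dist m w = G.dist m v + 1}
  have hp : ∃ p : V → V, ∀ v, v ≠ m → G.Adj (p v) v ∧ G.dist m v = G.dist m (p v) + 1 := by
    have : ∀ v, ∃ w, v ≠ m → G.Adj w v ∧ G.dist m v = G.dist m w + 1 := fun v => by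
      by_cases h : v = m
      · exact ⟨m, fun h' => absurd h h'⟩
      · obtain ⟨w, hw⟩ := aux_parent_exists hG m v h
        exact ⟨w, fun _ => hw⟩
    choose p hp using this
    exact ⟨p, hp⟩
  obtain ⟨p, hp⟩ := hp
  have hdm : ∀ v, G.dist m v = 0 ↔ m = v := fun v => hG.connected.dist_eq_zero_iff
  have hCm : C m = G.neighborSet m := by
    ext w
    simp only [C, Set.mem_ofPred_eq, mem_neighborSet, dist_self, zero_add]
    exact ⟨fun h => h.1, fun h => ⟨h, dist_eq_one_iff_adj.2 h⟩⟩
  have hfin : ∀ v, (C v).Finite := fun v =>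
    (Set.finite_of_ncard_ne_zero (by rw [hreg v]; omega) : (G.neighborSet v).Finite).subset
      fun w hw => hw.1
  have hCcard : ∀ v, v ≠ m → (C v).ncard = q := fun v hv => by
    have h1 : G.neighborSet v = insert (p v) (C v) := by
      ext w
      simp only [C, Set.mem_insert_iff, Set.mem_ofPred_eq, mem_neighborSet]
      constructor
      · intro h
        rcases hG.dist_eq_dist_add_one_of_adj m h with h' | h'
        · exact Or.inl (aux_parent_unique hG m v _ _ h.symm h' (hp v hv).1 (hp v hv).2)
        · exact Or.inr ⟨h, h'⟩
      · rintro (rfl | h)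
        · exact (hp v hv).1.symm
        · exact h.1
    have h2 : p v ∉ C v := fun h => by
      have := h.2
      have := (hp v hv).2
      omega
    have := hreg v
    rw [h1, Set.ncard_insert_of_notMem h2 (hfin v)] at this
    omega
  have he : ∃ e : V → V → V → V, (∀ v y, (v = m ↔ y = m) → Set.BijOn (e v y) (C v) (C y)) ∧
      e m m = Equiv.swap a b := by
    have : ∀ v y, ∃ f : V → V, ((v = m ↔ y = m) → Set.BijOn f (C v) (C y)) ∧
        (v = m → y = m → f = Equiv.swap a b) := by
      intro v y
      by_cases hv : v = m
      · refine ⟨Equiv.swap a b, ?_, fun _ _ => rfl⟩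
        intro h
        have hy := h.1 hv
        subst hv
        subst hy
        rw [hCm]
        refine ⟨?_, (Equiv.injective _).injOn, ?_⟩
        · intro x hx
          simp only [mem_neighborSet] at hx ⊢
          grind
        · intro x hx
          refine ⟨Equiv.swap a b x, ?_, by simp⟩
          simp only [mem_neighborSet] at hx ⊢
          grind
      · by_cases hy : y = m
        · exact ⟨id, fun h => absurd (h.2 hy) hv, fun h => absurd h hv⟩
        · obtain ⟨f, hf⟩ := (hfin v).exists_bijOn_of_encard_eq (t := C y) (by
            rw [← (hfin v).cast_ncard_eq, ← (hfin y).cast_ncard_eq, hCcard v hv, hCcard y hy])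
          exact ⟨f, fun _ => hf, fun h => absurd h hv⟩
    choose e he using this
    exact ⟨e, fun v y => (he v y).1, (he m m).2 rfl rfl⟩
  obtain ⟨e, he, hem⟩ := he
  let F : ℕ → V → V := fun n => Nat.rec (fun _ => m) (fun _ f v => e (p v) (f (p v)) v) n
  let f : V → V := fun v => F (G.dist m v) v
  have fm : f m = m := by simp [f, F]
  have fs : ∀ v, v ≠ m → f v = e (p v) (f (p v)) v := fun v hv => by
    simp only [f]
    rw [(hp v hv).2]
  have memC : ∀ v, v ≠ m → v ∈ C (p v) := fun v hv => hp v hv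
  have fd : ∀ n v, G.dist m v = n → G.dist m (f v) = n := by
    intro n
    induction n with
    | zero =>
      intro v hv
      rw [hdm] at hv
      subst hv
      rw [fm]; simp
    | succ n ih =>
      intro v hv
      have hvm : v ≠ m := by rintro rfl; simp at hv
      have h1 := ih (p v) (by have := (hp v hvm).2; omega)
      have h2 : p v = m ↔ f (p v) = m := by
        have := (hp v hvm).2
        rw [eq_comm, ← hdm, eq_comm (b := m), ← hdm]
        omega
      have := ((he _ _ h2).mapsTo (memC v hvm)).2
      rw [fs v hvm]
      omega
  have fd' : ∀ v, G.dist m (f v) = G.dist m v := fun v => fd _ v rfl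
  have fmi : ∀ v, v = m ↔ f v = m := fun v => by
    rw [eq_comm, ← hdm, eq_comm (b := m), ← hdm, fd']
  have fC : ∀ v, v ≠ m → f v ∈ C (f (p v)) := fun v hv => by
    rw [fs v hv]
    exact (he _ _ (fmi _)).mapsTo (memC v hv)
  have pu : ∀ v w, v ∈ C w → p v = w := fun v w h => by
    have hv : v ≠ m := by
      rintro rfl
      have := h.2
      simp at this
    exact aux_parent_unique hG m v _ _ (hp v hv).1 (hp v hv).2 h.1 h.2
  have neC : ∀ v w, v ∈ C w → v ≠ m := fun v w h => by
    rintro rfl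
    have := h.2
    simp at this
  have fp : ∀ v, v ≠ m → p (f v) = f (p v) := fun v hv => pu _ _ (fC v hv)
  have finj : ∀ n v w, G.dist m v = n → f v = f w → v = w := by
    intro n
    induction n with
    | zero =>
      intro v w hv h
      rw [hdm] at hv
      subst hv
      rw [fm] at h
      exact ((fmi w).2 h.symm).symm
    | succ n ih =>
      intro v w hv h
      have hvm : v ≠ m := by rintro rfl; simp at hv
      have hwm : w ≠ m := by
        intro hw
        exact hvm ((fmi v).2 (h.trans ((fmi w).1 hw)))
      have h1 : p v = p w := ih _ _ (by have := (hp v hvm).2; omega) (by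
        rw [← fp v hvm, ← fp w hwm, h])
      have h2 := memC w hwm
      rw [fs v hvm, fs w hwm, ← h1] at h
      rw [← h1] at h2
      exact (he _ _ (fmi _)).injOn (memC v hvm) h2 h
  have fsurj : ∀ n y, G.dist m y = n → ∃ v, f v = y := by
    intro n
    induction n with
    | zero =>
      intro y hy
      rw [hdm] at hy
      exact ⟨m, fm.trans hy⟩
    | succ n ih =>
      intro y hy
      have hym : y ≠ m := by rintro rfl; simp at hy
      obtain ⟨x, hx⟩ := ih (p y) (by have := (hp y hym).2; omega)
      obtain ⟨v, hv, hv'⟩ := (he x (f x) (fmi x)).surjOn (by rw [hx]; exact memC y hym)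
      refine ⟨v, ?_⟩
      rw [fs v (neC _ _ hv), pu _ _ hv, hv']
  have adjC : ∀ v w, G.Adj v w ↔ v ∈ C w ∨ w ∈ C v := by
    intro v w
    constructor
    · intro h
      rcases hG.dist_eq_dist_add_one_of_adj m h with h' | h'
      · exact Or.inl ⟨h.symm, h'⟩
      · exact Or.inr ⟨h, h'⟩
    · rintro (h | h)
      · exact h.1.symm
      · exact h.1
  have Cf : ∀ v w, f v ∈ C (f w) ↔ v ∈ C w := by
    intro v w
    constructor
    · intro h
      have hv : v ≠ m := fun h' => neC _ _ h ((fmi v).1 h')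
      have h1 := pu _ _ h
      rw [fp v hv] at h1
      have h2 := finj _ _ _ rfl h1
      rw [← h2]
      exact memC v hv
    · intro h
      have := fC v (neC _ _ h)
      rwa [pu _ _ h] at this
  have fx : ∀ x, G.Adj m x → f x = Equiv.swap a b x := by
    intro x hx
    have h1 : x ∈ C m := by rw [hCm]; exact hx
    rw [fs x hx.ne', pu _ _ h1, fm, hem]
  have hbij : Function.Bijective f := ⟨fun v w h => finj _ v w rfl h, fun y => fsurj _ y rfl⟩
  refine ⟨Equiv.ofBijective f hbij, ?_, ?_, ?_, ?_⟩
  · intro v w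
    simp only [Equiv.ofBijective_apply]
    rw [adjC, adjC, Cf, Cf]
  · simpa using fm
  · simp [fx a ha]
  · intro x hx h1 h2
    simp [fx x hx, Equiv.swap_apply_of_ne_of_ne h1 h2]


/-- For a `(q+1)`-regular tree `T` (with `q ≥ 2`) on an infinite vertex set, the subgroup
of `Aut(T)` generated by the automorphisms fixing both endpoints of some edge is exactly
the group `Aut⁺(T)` of type-preserving automorphisms. -/
theorem closure_edgeFixing_eq_typePreservingAut {V : Type*} [Infinite V] (q : ℕ)
    (hq : 2 ≤ q) (G : SimpleGraph V) (hconn : G.Connected) (hacyc : G.IsAcyclic)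
    (hreg : ∀ v : V, (G.neighborSet v).ncard = q + 1)
    (A : Subgroup (Equiv.Perm V))
    (hA : (A : Set (Equiv.Perm V)) =
      {φ : Equiv.Perm V | (∀ v w : V, G.Adj (φ v) (φ w) ↔ G.Adj v w) ∧
        ∀ v : V, Even (G.dist v (φ v))}) :
    Subgroup.closure {φ : Equiv.Perm V |
        (∀ v w : V, G.Adj (φ v) (φ w) ↔ G.Adj v w) ∧
        ∃ v w : V, G.Adj v w ∧ φ v = v ∧ φ w = w} = A := by

  have hG : G.IsTree := ⟨hconn, hacyc⟩
  apply le_antisymm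
  · rw [Subgroup.closure_le, hA]
    rintro φ ⟨h, v, w, -, hv, -⟩
    refine ⟨h, fun u => ?_⟩
    let F : G →g G := ⟨φ, fun {a b} hab => (h a b).2 hab⟩
    obtain ⟨p⟩ := hconn u v
    have hv' : F v = v := hv
    have h1 := aux_walk_parity hG u p
    have h2 := aux_walk_parity hG u (p.map F)
    rw [Walk.length_map, hv'] at h2
    have h3 : F u = φ u := rfl
    rw [h3] at h2
    rw [dist_self] at h1
    rw [Nat.even_iff]
    omega
  · set S : Set (Equiv.Perm V) := {φ : Equiv.Perm V |
        (∀ v w : V, G.Adj (φ v) (φ w) ↔ G.Adj v w) ∧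
        ∃ v w : V, G.Adj v w ∧ φ v = v ∧ φ w = w} with hS
    have key : ∀ m a b, G.Adj m a → G.Adj m b → ∃ h ∈ Subgroup.closure S, 
        (∀ v w : V, G.Adj (h v) (h w) ↔ G.Adj v w) ∧ h m = m ∧ h a = b := by
      intro m a b ha hb
      obtain ⟨φ, h1, h2, h3, h4⟩ := aux_swap q hG hreg m a b ha hb
      refine ⟨φ, Subgroup.subset_closure ⟨h1, ?_⟩, h1, h2, h3⟩
      have : ∃ x ∈ G.neighborSet m, x ∉ ({a, b} : Set V) := by
        by_contra! hc
        have h5 : G.neighborSet m ⊆ {a, b} := hc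
        have h6 := Set.ncard_le_ncard h5 (by simp)
        have h7 := Set.ncard_insert_le a {b}
        rw [hreg, ] at h6
        rw [Set.ncard_singleton] at h7
        omega
      obtain ⟨x, hx, hx'⟩ := this
      simp only [Set.mem_insert_iff, Set.mem_singleton_iff, not_or] at hx'
      exact ⟨m, x, hx, h2, h4 x hx hx'.1 hx'.2⟩
    have trans : ∀ n v w, G.dist v w = 2 * n → ∃ h ∈ Subgroup.closure S, 
        (∀ v w : V, G.Adj (h v) (h w) ↔ G.Adj v w) ∧ h v = w := by
      intro n
      induction n with
      | zero =>
        intro v w h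
        have : v = w := hconn.dist_eq_zero_iff.1 h
        exact ⟨1, one_mem _, by simp, by simpa using this⟩
      | succ n ih =>
        intro v w h
        have hvw : w ≠ v := by rintro rfl; simp at h
        obtain ⟨x, hx, hx'⟩ := aux_parent_exists hG w v hvw.symm
        have hxw : x ≠ w := by
          rintro rfl
          rw [SimpleGraph.dist_comm] at h
          rw [dist_self] at hx'
          omega
        obtain ⟨y, hy, hy'⟩ := aux_parent_exists hG w x hxw
        obtain ⟨h, hh, ha, hm⟩ := ih y w (by
          rw [SimpleGraph.dist_comm] at h ⊢
          omega)
        obtain ⟨k, hk, hka, hkm, hkv⟩ := key x v y hx hy.symm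
        refine ⟨h * k, mul_mem hh hk, ?_, ?_⟩
        · intro a b
          simp [ha, hka]
        · simp [hkv, hm]
    intro φ hφ
    have hφ' : φ ∈ (A : Set (Equiv.Perm V)) := hφ
    rw [hA] at hφ'
    obtain ⟨h1, h2⟩ := hφ'
    obtain ⟨v⟩ := hconn.nonempty
    obtain ⟨n, hn⟩ := h2 v
    obtain ⟨h, hh, ha, hv⟩ := trans n v (φ v) (by omega)
    have hvi : h⁻¹ (φ v) = v := by rw [← hv]; simp
    have hai : ∀ a b, G.Adj (h⁻¹ a) (h⁻¹ b) ↔ G.Adj a b := fun a b => by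
      rw [← ha]; simp
    have : ∃ w, G.Adj v w := by
      have : (G.neighborSet v).Nonempty := by
        rw [← Set.ncard_pos (Set.finite_of_ncard_ne_zero (by rw [hreg v]; omega)), hreg]
        omega
      exact this
    obtain ⟨w, hw⟩ := this
    have hw' : G.Adj v (h⁻¹ (φ w)) := by
      have := (hai _ _).2 ((h1 _ _).2 hw)
      rwa [hvi] at this
    obtain ⟨k, hk, hka, hkv, hkw⟩ := key v w _ hw hw'
    have hki : ∀ a b, G.Adj (k⁻¹ a) (k⁻¹ b) ↔ G.Adj a b := fun a b => by
      rw [← hka]; simp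
    have hfin : k⁻¹ * h⁻¹ * φ ∈ Subgroup.closure S := by
      refine Subgroup.subset_closure ⟨?_, v, w, hw, ?_, ?_⟩
      · intro a b
        simp only [Equiv.Perm.mul_apply]
        rw [hki, hai, h1]
      · simp only [Equiv.Perm.mul_apply]
        rw [hvi, Equiv.Perm.inv_eq_iff_eq, hkv]
      · simp only [Equiv.Perm.mul_apply]
        rw [Equiv.Perm.inv_eq_iff_eq, hkw]
    have : φ = h * k * (k⁻¹ * h⁻¹ * φ) := by group
    rw [this]
    exact mul_mem (mul_mem hh hk) hfin
end

section
/- Let q ≥ 2 and let T be a simple graph on an infinite vertex set that is a tree (connected and acyclic) in which every vertex has degree exactly q+1. Let H be the subgroup of the automorphism group of T generated by the set of automorphisms fixing both endpoints of some edge. Then H acts transitively on the (unordered) edges of T: for any adjacent vertices v, w and any adjacent vertices v', w', there exists φ ∈ H with {φ(v), φ(w)} = {v', w'}. -/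
theorem aux_swap_s7 {V : Type*} (r : V) (p : V → V) (d : V → ℕ) (lab : V → ℕ) (ch : V → ℕ → V)
    (q : ℕ) (hd : ∀ x, x ≠ r → d (p x) < d x)
    (h1 : ∀ x, x ≠ r → p x ≠ r → ch (p x) (lab x) = x ∧ lab x < q)
    (h2 : ∀ y i, y ≠ r → i < q → ch y i ≠ r ∧ p (ch y i) = y ∧ lab (ch y i) = i)
    (s : V → V) (hs : ∀ x, x ≠ r → p x = r → s x ≠ r ∧ p (s x) = r ∧ s (s x) = x) :
    ∃ f : V → V, f r = r ∧ (∀ x, x ≠ r → p x = r → f x = s x) ∧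
      (∀ x, f (f x) = x) ∧ ∀ x, x ≠ r → f x ≠ r ∧ p (f x) = f (p x) := by
  classical
  let F : ℕ → V → V := fun n => Nat.rec (fun x => x)
    (fun _ g x => if x = r then r else if p x = r then s x else ch (g (p x)) (lab x)) n
  have F1 : ∀ n x, F (n+1) x = if x = r then r else if p x = r then s x
      else ch (F n (p x)) (lab x) := fun _ _ => rfl
  have hF : ∀ n m x, d x < n → d x < m → F n x = F m x := by
    intro n
    induction n with
    | zero => intro m x h; omega
    | succ n ih =>
      intro m x h h'
      obtain _ | m := m
      · omega
      rw [F1, F1]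
      split_ifs with a b
      · rfl
      · rfl
      · have := hd x a
        rw [ih m (p x) (by omega) (by omega)]
  let f : V → V := fun x => F (d x + 1) x
  have hf : ∀ x, f x = if x = r then r else if p x = r then s x else ch (f (p x)) (lab x) := by
    intro x
    change F (d x + 1) x = _
    rw [F1]
    split_ifs with a b
    · rfl
    · rfl
    · have := hd x a
      rw [hF (d x) (d (p x) + 1) (p x) (by omega) (by omega)]
  have fr : f r = r := by rw [hf]; simp
  have fs : ∀ x, x ≠ r → p x = r → f x = s x := by
    intro x a b; rw [hf]; simp [a, b]
  have fc : ∀ x, x ≠ r → p x ≠ r → f x = ch (f (p x)) (lab x) := by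
    intro x a b; rw [hf]; simp [a, b]
  have key : ∀ n x, d x < n → f (f x) = x ∧ (x ≠ r → f x ≠ r ∧ p (f x) = f (p x)) := by
    intro n
    induction n with
    | zero => intro x h; omega
    | succ n ih =>
      intro x h
      by_cases a : x = r
      · subst a; simp [fr]
      by_cases b : p x = r
      · obtain ⟨u, v, w⟩ := hs x a b
        rw [fs x a b, fs _ u v, b, fr]
        exact ⟨w, fun _ => ⟨u, v⟩⟩
      · have := hd x a
        obtain ⟨i1, i2⟩ := ih (p x) (by omega)
        obtain ⟨i3, -⟩ := i2 b
        obtain ⟨j1, j2⟩ := h1 x a b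
        obtain ⟨u, v, w⟩ := h2 (f (p x)) (lab x) i3 j2
        rw [fc x a b]
        refine ⟨?_, fun _ => ⟨u, v⟩⟩
        rw [fc _ u (by rw [v]; exact i3), v, w, i1, j1]
  exact ⟨f, fr, fs, fun x => (key _ x (Nat.lt_succ_self _)).1,
    fun x => (key _ x (Nat.lt_succ_self _)).2⟩

theorem aux_parent {V : Type*} (G : SimpleGraph V) (hconn : G.Connected) (hacyc : G.IsAcyclic)
    (r : V) : ∃ (p : V → V) (d : V → ℕ), (∀ x, x ≠ r → d (p x) < d x ∧ G.Adj x (p x)) ∧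
      ∀ x y, G.Adj x y → (x ≠ r ∧ p x = y) ∨ (y ≠ r ∧ p y = x) := by
  classical
  have hex : ∀ x, ∃ w : G.Walk x r, w.IsPath := fun x => by
    obtain ⟨w⟩ := hconn.preconnected x r
    exact ⟨w.toPath, w.toPath.2⟩
  choose P hP using hex
  have uniq : ∀ {x y} (u v : G.Walk x y), u.IsPath → v.IsPath → u = v := by
    intro x y u v hu hv
    exact congrArg Subtype.val (hacyc.path_unique ⟨u, hu⟩ ⟨v, hv⟩)
  refine ⟨fun x => (P x).snd, fun x => (P x).length, ?_, ?_⟩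
  · intro x hx
    have hn : ¬ (P x).Nil := SimpleGraph.Walk.not_nil_of_ne hx
    refine ⟨?_, (P x).adj_snd hn⟩
    have := uniq (P (P x).snd) (P x).tail (hP _) ((hP x).tail)
    show (P (P x).snd).length < (P x).length
    rw [this, ← SimpleGraph.Walk.length_tail_add_one hn]
    omega
  · intro x y hxy
    by_cases h : y ∈ (P x).support
    · left
      have hx : x ≠ r := by
        rintro rfl
        have := uniq (P x) SimpleGraph.Walk.nil (hP x) SimpleGraph.Walk.IsPath.nil
        rw [this] at h
        simp at h
        exact hxy.ne h.symm
      refine ⟨hx, ?_⟩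
      have e1 := uniq ((P x).takeUntil y h) (SimpleGraph.Walk.cons hxy .nil)
        ((hP x).takeUntil h) (by simp [hxy.ne])
      have e2 := (P x).take_spec h
      rw [e1] at e2
      show (P x).snd = y
      rw [← e2]
      simp
    · right
      have e := uniq (P y) (SimpleGraph.Walk.cons hxy.symm (P x)) (hP y) (by simp [hP x, h])
      refine ⟨?_, ?_⟩
      · rintro rfl
        exact h (P x).end_mem_support
      · show (P y).snd = x
        rw [e]; simp

theorem aux_auto {V : Type*} (q : ℕ) (G : SimpleGraph V)
    (hconn : G.Connected) (hacyc : G.IsAcyclic)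
    (hreg : ∀ v : V, (G.neighborSet v).ncard = q + 1) (hq : 2 ≤ q) (r a b : V)
    (ha : G.Adj r a) (hb : G.Adj r b) :
    ∃ φ : Equiv.Perm V, ((∀ a b : V, G.Adj (φ a) (φ b) ↔ G.Adj a b) ∧
          ∃ a b : V, G.Adj a b ∧ φ a = a ∧ φ b = b) ∧ φ r = r ∧ φ a = b := by
  classical
  obtain ⟨p, d, hpd, hadj⟩ := aux_parent G hconn hacyc r
  have pr : ∀ x, G.Adj r x → x ≠ r ∧ p x = r := by
    intro x hx
    rcases hadj r x hx with h | h
    · exact absurd rfl h.1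
    · exact h
  -- children
  have hC : ∀ y, ∃ (l : V → ℕ) (c : ℕ → V), y ≠ r →
      (∀ x, x ≠ r → p x = y → c (l x) = x ∧ l x < q) ∧
      ∀ i, i < q → c i ≠ r ∧ p (c i) = y ∧ l (c i) = i := by
    intro y
    by_cases hy : y = r
    · exact ⟨fun _ => 0, fun _ => r, fun h => absurd hy h⟩
    let C : Set V := G.neighborSet y \ {p y}
    have hfin : (G.neighborSet y).Finite := Set.finite_of_ncard_ne_zero (by rw [hreg]; omega)
    have hCf : C.Finite := hfin.subset Set.diff_subset
    have hcard : C.ncard = q := by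
      have := Set.ncard_diff_singleton_add_one (s := G.neighborSet y) (a := p y)
        (hpd y hy).2 hfin
      rw [hreg] at this
      exact Nat.succ_injective this
    have hmem : ∀ x, x ∈ C ↔ x ≠ r ∧ p x = y := by
      intro x
      constructor
      · rintro ⟨h1, h2⟩
        rcases hadj y x h1 with h | h
        · exact absurd h.2.symm h2
        · exact h
      · rintro ⟨h1, rfl⟩
        refine ⟨(hpd x h1).2.symm, ?_⟩
        intro h
        have h : x = p (p x) := h
        have := (hpd x h1).1
        have := (hpd _ hy).1
        rw [← h] at this
        omega
    have := hCf.fintype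
    have e : C ≃ Fin q := Fintype.equivFinOfCardEq (by
      rw [← hcard, ← Nat.card_coe_set_eq, Nat.card_eq_fintype_card])
    refine ⟨fun x => if h : x ∈ C then e ⟨x, h⟩ else 0,
      fun i => if h : i < q then e.symm ⟨i, h⟩ else r, fun _ => ⟨?_, ?_⟩⟩
    · intro x h1 h2
      have hx := (hmem x).2 ⟨h1, h2⟩
      simp [hx]
    · intro i hi
      have := (hmem _).1 (e.symm ⟨i, hi⟩).2
      simp only [hi, dite_true]
      exact ⟨this.1, this.2, by simp⟩
  choose l c hlc using hC
  obtain ⟨f, fr, fs, ff, fp⟩ := aux_swap_s7 r p d (fun x => l (p x) x) c q (fun x hx => (hpd x hx).1)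
    (fun x hx hpx => (hlc (p x) hpx).1 x hx rfl)
    (fun y i hy hi => by
      obtain ⟨h1, h2, h3⟩ := (hlc y hy).2 i hi
      exact ⟨h1, h2, by simp only [h2]; exact h3⟩)
    (Equiv.swap a b) (by
      intro x h1 h2
      have := pr a ha
      have := pr b hb
      have key : Equiv.swap a b x ≠ r ∧ p (Equiv.swap a b x) = r := by
        rw [Equiv.swap_apply_def]
        split_ifs <;> simp_all
      exact ⟨key.1, key.2, by simp⟩)
  have hfadj : ∀ x y, G.Adj x y → G.Adj (f x) (f y) := by
    have : ∀ x, x ≠ r → G.Adj (f x) (f (p x)) := by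
      intro x hx
      obtain ⟨h1, h2⟩ := fp x hx
      rw [← h2]
      exact (hpd _ h1).2
    intro x y h
    rcases hadj x y h with ⟨k, rfl⟩ | ⟨k, rfl⟩
    · exact this _ k
    · exact (this _ k).symm
  have hc : ∃ c, G.Adj r c ∧ c ≠ a ∧ c ≠ b := by
    by_contra! hcon
    have hsub : G.neighborSet r ⊆ {a, b} := by
      intro x hx
      by_cases h : x = a
      · simp [h]
      · simp [hcon x hx h]
    have h1 := Set.ncard_le_ncard hsub (by simp)
    have h2 := Set.ncard_insert_le a {b}
    rw [hreg] at h1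
    simp at h2
    omega
  obtain ⟨c', h1, h2, h3⟩ := hc
  refine ⟨⟨f, f, ff, ff⟩, ⟨?_, r, c', h1, fr, ?_⟩, fr, ?_⟩
  · intro x y
    refine ⟨fun h => ?_, hfadj x y⟩
    have := hfadj _ _ h
    simpa [ff] using this
  · change f c' = c'
    rw [fs c' (pr _ h1).1 (pr _ h1).2, Equiv.swap_apply_of_ne_of_ne h2 h3]
  · change f a = b
    rw [fs a (pr _ ha).1 (pr _ ha).2, Equiv.swap_apply_left]


/-- For a `(q+1)`-regular tree `T` (with `q ≥ 2`) on an infinite vertex set, the subgroup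
generated by the automorphisms fixing both endpoints of some edge acts transitively on
the unordered edges of `T`. -/
theorem closure_edgeFixing_transitive_on_edges {V : Type*} [Infinite V] (q : ℕ)
    (hq : 2 ≤ q) (G : SimpleGraph V) (hconn : G.Connected) (hacyc : G.IsAcyclic)
    (hreg : ∀ v : V, (G.neighborSet v).ncard = q + 1) :
    ∀ v w v' w' : V, G.Adj v w → G.Adj v' w' →
      ∃ φ ∈ Subgroup.closure {φ : Equiv.Perm V |
          (∀ a b : V, G.Adj (φ a) (φ b) ↔ G.Adj a b) ∧
          ∃ a b : V, G.Adj a b ∧ φ a = a ∧ φ b = b},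
        ({φ v, φ w} : Set V) = {v', w'} := by

  intro v w v' w' h h'
  obtain ⟨W⟩ := hconn.preconnected v v'
  induction W generalizing w with
  | nil =>
    obtain ⟨φ, h1, h2, h3⟩ := aux_auto q G hconn hacyc hreg hq _ w w' h h'
    exact ⟨φ, Subgroup.subset_closure h1, by rw [h2, h3]⟩
  | @cons v u v' hvu W ih =>
    obtain ⟨φ, h1, h2, h3⟩ := aux_auto q G hconn hacyc hreg hq _ w u h hvu
    obtain ⟨ψ, k1, k2⟩ := ih v hvu.symm h'
    refine ⟨ψ * φ, mul_mem k1 (Subgroup.subset_closure h1), ?_⟩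
    rw [Equiv.Perm.mul_apply, Equiv.Perm.mul_apply, h2, h3, Set.pair_comm, k2]
end

section
/- For every natural number n with n ≥ 8, the alternating group on n letters is generated by the set of permutations that are products of four disjoint transpositions, i.e., the permutations whose cycle type is {2, 2, 2, 2}. -/
/-- For `n ≥ 8`, the alternating group on `n` letters is generated by the permutations
that are products of four disjoint transpositions (cycle type `{2, 2, 2, 2}`). -/
theorem alternatingGroup_eq_closure_four_disjoint_transpositions (n : ℕ) (hn : 8 ≤ n) :
    Subgroup.closure {σ : Equiv.Perm (Fin n) | σ.cycleType = {2, 2, 2, 2}} =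
      alternatingGroup (Fin n) := by
  have hle : Subgroup.closure {σ : Equiv.Perm (Fin n) | σ.cycleType = {2, 2, 2, 2}} ≤
      alternatingGroup (Fin n) := by
    rw [Subgroup.closure_le]
    intro σ hσ
    have hσ' : σ.cycleType = {2, 2, 2, 2} := hσ
    simp only [SetLike.mem_coe, Equiv.Perm.mem_alternatingGroup]
    rw [Equiv.Perm.sign_of_cycleType, hσ']
    decide
  apply le_antisymm hle
  obtain ⟨g, hg⟩ : ∃ g : Equiv.Perm (Fin n), g.cycleType = {2, 2, 2, 2} := by
    rw [Equiv.Perm.exists_with_cycleType_iff]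
    refine ⟨?_, ?_⟩
    · simpa using hn
    · intro a ha
      simp at ha
      omega
  have hgN := Subgroup.subset_closure (G := Equiv.Perm (Fin n))
    (k := {σ : Equiv.Perm (Fin n) | σ.cycleType = {2, 2, 2, 2}}) hg
  have hnorm : (Subgroup.closure
      {σ : Equiv.Perm (Fin n) | σ.cycleType = {2, 2, 2, 2}}).Normal := by
    constructor
    intro x hx h
    induction hx using Subgroup.closure_induction with
    | mem y hy =>
      exact Subgroup.subset_closure (Equiv.Perm.cycleType_conj.trans hy)
    | one => simp
    | mul y z _ _ hy hz =>
      have := mul_mem hy hz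
      rwa [conj_mul] at this
    | inv y _ hy =>
      have := inv_mem hy
      rwa [conj_inv] at this
  have hs : IsSimpleGroup (alternatingGroup (Fin n)) :=
    alternatingGroup.isSimpleGroup (by simp; omega)
  rw [← Subgroup.subgroupOf_eq_top]
  refine (hs.eq_bot_or_eq_top_of_normal _ (hnorm.subgroupOf _)).resolve_left ?_
  intro hbot
  have h1 : (⟨g, hle hgN⟩ : alternatingGroup (Fin n)) = 1 := by
    rw [← Subgroup.mem_bot, ← hbot]
    exact hgN
  have h2 : g = 1 := congrArg Subtype.val h1
  rw [h2, Equiv.Perm.cycleType_one] at hg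
  exact absurd hg (by decide)
end
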